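/- arXiv:1603.09159 — 11 statements merged into one kernel-verified Lean document; each statement's English description precedes it below -/
import Mathlib

section
/- Let (X,d) be a complete metric space, R a binary relation on X and f a self-mapping on X. Suppose: (i) R is f-closed; (ii) either f is continuous or R is d-self-closed; (iii) there exists x ∈ X with (x, f x) ∈ R; (iv) there exists α ∈ [0,1) such that d(f x, f y) ≤ α·d(x,y) for all x,y ∈ X with (x,y) ∈ R. Then f has a fixed point. Moreover, if additionally (v) for every pair x,y ∈ X there is a path in R^s from x to y, then f has a unique fixed point. -/
open Filter

/-- Theorem 1, relation-theoretic Banach contraction principle: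
In a complete metric space with a binary relation `R`, if `R` is `f`-closed,
`f` is continuous or `R` is `d`-self-closed, some `x` satisfies `R x (f x)`, and
`f` is an `R`-restricted `α`-contraction, then `f` has a fixed point; if moreover
`X` is `R^s`-connected, the fixed point is unique. -/
theorem relation_theoretic_BCP {X : Type*} [MetricSpace X] [CompleteSpace X]
    (R : X → X → Prop) (f : X → X)
    (h1 : ∀ x y : X, R x y → R (f x) (f y))
    (h2 : Continuous f ∨
      (∀ (s : ℕ → X) (x : X), (∀ n, R (s n) (s (n + 1))) →
        Tendsto s atTop (nhds x) →
        ∃ φ : ℕ → ℕ, StrictMono φ ∧ ∀ k, R (s (φ k)) x ∨ R x (s (φ k))))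
    (h3 : ∃ x : X, R x (f x))
    (h4 : ∃ α : ℝ, 0 ≤ α ∧ α < 1 ∧
      ∀ x y : X, R x y → dist (f x) (f y) ≤ α * dist x y) :
    (∃ x : X, f x = x) ∧
    ((∀ x y : X, ∃ (k : ℕ) (z : ℕ → X), z 0 = x ∧ z k = y ∧
        ∀ i < k, (R (z i) (z (i + 1)) ∨ R (z (i + 1)) (z i))) →
      ∃! x : X, f x = x) := by
  obtain ⟨α, hα0, hα1, hc⟩ := h4
  have hc' : ∀ x y : X, (R x y ∨ R y x) → dist (f x) (f y) ≤ α * dist x y := by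
    rintro x y (h | h)
    · exact hc x y h
    · rw [dist_comm (f x), dist_comm x]
      exact hc y x h
  have hit : ∀ (n : ℕ) (x y : X), (R x y ∨ R y x) →
      dist (f^[n] x) (f^[n] y) ≤ α ^ n * dist x y := by
    intro n
    induction n with
    | zero => intro x y _; simp
    | succ n ih =>
      intro x y h
      rw [Function.iterate_succ_apply, Function.iterate_succ_apply]
      calc _ ≤ α ^ n * dist (f x) (f y) := ih _ _ (h.imp (h1 x y) (h1 y x))
        _ ≤ α ^ n * (α * dist x y) :=
          mul_le_mul_of_nonneg_left (hc' x y h) (pow_nonneg hα0 n)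
        _ = _ := by ring
  have hpow : Tendsto (fun n : ℕ => α ^ n) atTop (nhds 0) :=
    tendsto_pow_atTop_nhds_zero_of_lt_one hα0 hα1
  have hex : ∃ x : X, f x = x := by
    obtain ⟨x₀, hx₀⟩ := h3
    have hR : ∀ n : ℕ, R (f^[n] x₀) (f^[n + 1] x₀) := by
      intro n
      induction n with
      | zero => exact hx₀
      | succ n ih =>
        rw [Function.iterate_succ_apply' f n, Function.iterate_succ_apply' f (n + 1)]
        exact h1 _ _ ih
    have hcau : CauchySeq (fun n : ℕ => f^[n] x₀) := by
      refine cauchySeq_of_le_geometric α (dist x₀ (f x₀)) hα1 ?_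
      intro n
      rw [mul_comm, Function.iterate_succ_apply]
      exact hit n _ _ (Or.inl hx₀)
    obtain ⟨x, hx⟩ := cauchySeq_tendsto_of_complete hcau
    have hx1 : Tendsto (fun n : ℕ => f (f^[n] x₀)) atTop (nhds x) := by
      have := (tendsto_add_atTop_iff_nat 1).2 hx
      simpa only [Function.iterate_succ_apply'] using this
    refine ⟨x, ?_⟩
    rcases h2 with h2 | h2
    · exact tendsto_nhds_unique ((h2.tendsto x).comp hx) hx1
    · obtain ⟨φ, hφ, hr⟩ := h2 _ x hR hx
      have hφt := hφ.tendsto_atTop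
      have hs : Tendsto (fun k => f (f^[φ k] x₀)) atTop (nhds (f x)) := by
        rw [tendsto_iff_dist_tendsto_zero]
        have h0 : Tendsto (fun k => α * dist (f^[φ k] x₀) x) atTop (nhds 0) := by
          simpa using ((tendsto_iff_dist_tendsto_zero.1 hx).comp hφt).const_mul α
        exact squeeze_zero (fun _ => dist_nonneg) (fun k => hc' _ _ (hr k)) h0
      exact tendsto_nhds_unique hs (hx1.comp hφt)
  refine ⟨hex, fun h5 => ?_⟩
  obtain ⟨x, hx⟩ := hex
  refine ⟨x, hx, fun y hy => ?_⟩
  obtain ⟨k, z, hz0, hzk, hz⟩ := h5 x y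
  have key : ∀ i ≤ k, Tendsto (fun n : ℕ => dist (f^[n] (z 0)) (f^[n] (z i))) atTop (nhds 0) := by
    intro i
    induction i with
    | zero => intro _; simp
    | succ i ih =>
      intro hi
      have hb : Tendsto (fun n : ℕ => dist (f^[n] (z 0)) (f^[n] (z i))
          + α ^ n * dist (z i) (z (i + 1))) atTop (nhds 0) := by
        simpa using (ih (by omega)).add (hpow.mul_const (dist (z i) (z (i + 1))))
      refine squeeze_zero (fun _ => dist_nonneg) (fun n => ?_) hb
      exact (dist_triangle _ (f^[n] (z i)) _).trans
        (add_le_add le_rfl (hit n _ _ (hz i (by omega))))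
  have hk := key k le_rfl
  simp only [hz0, hzk, Function.iterate_fixed hx, Function.iterate_fixed hy] at hk
  exact (dist_eq_zero.1 (tendsto_nhds_unique tendsto_const_nhds hk)).symm
end

section
/- Let (X,d) be a metric space, R a binary relation on X, Y an R-complete subspace of X, and f, g two self-mappings on X. Suppose: (a) f(X) ⊆ g(X) ∩ Y; (b) R is (f,g)-closed; (c) there exists x₀ ∈ X with (g x₀, f x₀) ∈ R; (d) there exists α ∈ [0,1) such that d(f x, f y) ≤ α·d(g x, g y) for all x,y ∈ X with (g x, g y) ∈ R; (e1) f and g are R-compatible; (e2) g is R-continuous; (e3) f is R-continuous. Then f and g have a coincidence point, i.e. there exists z ∈ X with g z = f z. -/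
open Filter

/-- Theorem 2, case (e) with `f` `R`-continuous: existence of a
coincidence point of `f` and `g`. -/
theorem coincidence_e_fRcontinuous {X : Type*} [MetricSpace X]
    (R : X → X → Prop) (Y : Set X) (f g : X → X)
    (hY : ∀ s : ℕ → X, (∀ n, s n ∈ Y) → (∀ n, R (s n) (s (n + 1))) → CauchySeq s →
      ∃ y ∈ Y, Tendsto s atTop (nhds y))
    (ha : ∀ x : X, f x ∈ Set.range g ∩ Y)
    (hb : ∀ x y : X, R (g x) (g y) → R (f x) (f y))
    (hc : ∃ x₀ : X, R (g x₀) (f x₀))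
    (hd : ∃ α : ℝ, 0 ≤ α ∧ α < 1 ∧
      ∀ x y : X, R (g x) (g y) → dist (f x) (f y) ≤ α * dist (g x) (g y))
    (he1 : ∀ (s : ℕ → X) (z : X),
      (∀ n, R (f (s n)) (f (s (n + 1)))) → (∀ n, R (g (s n)) (g (s (n + 1)))) →
      Tendsto (fun n => g (s n)) atTop (nhds z) →
      Tendsto (fun n => f (s n)) atTop (nhds z) →
      Tendsto (fun n => dist (g (f (s n))) (f (g (s n)))) atTop (nhds 0))
    (he2 : ∀ (s : ℕ → X) (x : X), (∀ n, R (s n) (s (n + 1))) →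
      Tendsto s atTop (nhds x) →
      Tendsto (fun n => g (s n)) atTop (nhds (g x)))
    (he3 : ∀ (s : ℕ → X) (x : X), (∀ n, R (s n) (s (n + 1))) →
      Tendsto s atTop (nhds x) →
      Tendsto (fun n => f (s n)) atTop (nhds (f x))) :
    ∃ z : X, g z = f z := by
  obtain ⟨x₀, h0⟩ := hc
  obtain ⟨α, hα0, hα1, hd⟩ := hd
  choose p hp using fun x => (ha x).1
  let s : ℕ → X := fun n => p^[n] x₀
  have hs : ∀ n, g (s (n + 1)) = f (s n) := by
    intro n
    show g (p^[n + 1] x₀) = f (p^[n] x₀)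
    rw [Function.iterate_succ_apply']
    exact hp _
  have hRg : ∀ n, R (g (s n)) (g (s (n + 1))) := by
    intro n
    induction n with
    | zero => rw [hs]; exact h0
    | succ k ih => rw [hs (k + 1), hs k]; exact hb _ _ ih
  have hRf : ∀ n, R (f (s n)) (f (s (n + 1))) := fun n => hb _ _ (hRg n)
  have hdist : ∀ n, dist (f (s n)) (f (s (n + 1))) ≤ dist (f (s 0)) (f (s 1)) * α ^ n := by
    intro n
    induction n with
    | zero => simp
    | succ k ih =>
      have h := hd _ _ (hRg (k + 1))
      rw [hs k, hs (k + 1)] at h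
      calc _ ≤ _ := h
        _ ≤ α * (dist (f (s 0)) (f (s 1)) * α ^ k) := mul_le_mul_of_nonneg_left ih hα0
        _ = _ := by ring
  have hC : CauchySeq (fun n => f (s n)) := cauchySeq_of_le_geometric α _ hα1 hdist
  obtain ⟨z, -, hz⟩ := hY (fun n => f (s n)) (fun n => (ha _).2) hRf hC
  have hgz : Tendsto (fun n => g (s n)) atTop (nhds z) := by
    rw [← tendsto_add_atTop_iff_nat 1]
    simpa only [hs] using hz
  have h1 := he1 s z hRf hRg hgz hz
  have h2 := he2 _ z hRf hz
  have h3 := he3 _ z hRg hgz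
  exact ⟨z, dist_eq_zero.1 (tendsto_nhds_unique (h2.dist h3) h1)⟩
end

section
/- Let (X,d) be a metric space, R a binary relation on X, Y an R-complete subspace of X, and f, g two self-mappings on X. Suppose: (a) f(X) ⊆ g(X) ∩ Y; (b) R is (f,g)-closed; (c) there exists x₀ ∈ X with (g x₀, f x₀) ∈ R; (d) there exists α ∈ [0,1) such that d(f x, f y) ≤ α·d(g x, g y) for all x,y ∈ X with (g x, g y) ∈ R; (e1) f and g are R-compatible; (e2) g is R-continuous; (e3) R is (g,d)-self-closed. Then f and g have a coincidence point, i.e. there exists z ∈ X with g z = f z. -/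
open Filter

/-- Theorem 2, case (e) with `R` `(g,d)`-self-closed: existence of a
coincidence point of `f` and `g`. -/
theorem coincidence_e_gdSelfClosed {X : Type*} [MetricSpace X]
    (R : X → X → Prop) (Y : Set X) (f g : X → X)
    (hY : ∀ s : ℕ → X, (∀ n, s n ∈ Y) → (∀ n, R (s n) (s (n + 1))) → CauchySeq s →
      ∃ y ∈ Y, Tendsto s atTop (nhds y))
    (ha : ∀ x : X, f x ∈ Set.range g ∩ Y)
    (hb : ∀ x y : X, R (g x) (g y) → R (f x) (f y))
    (hc : ∃ x₀ : X, R (g x₀) (f x₀))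
    (hd : ∃ α : ℝ, 0 ≤ α ∧ α < 1 ∧
      ∀ x y : X, R (g x) (g y) → dist (f x) (f y) ≤ α * dist (g x) (g y))
    (he1 : ∀ (s : ℕ → X) (z : X),
      (∀ n, R (f (s n)) (f (s (n + 1)))) → (∀ n, R (g (s n)) (g (s (n + 1)))) →
      Tendsto (fun n => g (s n)) atTop (nhds z) →
      Tendsto (fun n => f (s n)) atTop (nhds z) →
      Tendsto (fun n => dist (g (f (s n))) (f (g (s n)))) atTop (nhds 0))
    (he2 : ∀ (s : ℕ → X) (x : X), (∀ n, R (s n) (s (n + 1))) →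
      Tendsto s atTop (nhds x) →
      Tendsto (fun n => g (s n)) atTop (nhds (g x)))
    (he3 : ∀ (s : ℕ → X) (x : X), (∀ n, R (s n) (s (n + 1))) →
      Tendsto s atTop (nhds x) →
      ∃ φ : ℕ → ℕ, StrictMono φ ∧
        ∀ k, R (g (s (φ k))) (g x) ∨ R (g x) (g (s (φ k)))) :
    ∃ z : X, g z = f z := by
  obtain ⟨x₀, hx₀⟩ := hc
  obtain ⟨α, h0, h1, hd⟩ := hd
  have ha' : ∀ x, ∃ y, g y = f x := fun x => (ha x).1
  choose p hp using ha'
  let x : ℕ → X := fun n => p^[n] x₀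
  have hx : ∀ n, g (x (n + 1)) = f (x n) := by
    intro n
    simp only [x, Function.iterate_succ_apply', hp]
  have hR : ∀ n, R (g (x n)) (g (x (n + 1))) := by
    intro n
    induction n with
    | zero => rw [hx]; exact hx₀
    | succ n ih =>
      have h := hb _ _ ih
      rw [← hx, ← hx] at h
      exact h
  have hRf : ∀ n, R (f (x n)) (f (x (n + 1))) := fun n => hb _ _ (hR n)
  have hdist : ∀ n, dist (f (x n)) (f (x (n + 1))) ≤ dist (f (x 0)) (f (x 1)) * α ^ n := by
    intro n
    induction n with
    | zero => simp
    | succ n ih =>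
      have h := hd _ _ (hR (n + 1))
      rw [hx n, hx (n + 1)] at h
      calc _ ≤ α * dist (f (x n)) (f (x (n + 1))) := h
        _ ≤ α * (dist (f (x 0)) (f (x 1)) * α ^ n) := mul_le_mul_of_nonneg_left ih h0
        _ = _ := by ring
  have hC : CauchySeq (fun n => f (x n)) := cauchySeq_of_le_geometric α _ h1 hdist
  obtain ⟨z, -, hz⟩ := hY _ (fun n => (ha (x n)).2) hRf hC
  have hgz : Tendsto (fun n => g (x n)) atTop (nhds z) := by
    rw [← tendsto_add_atTop_iff_nat 1]
    simpa only [hx] using hz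
  have hcomp := he1 x z hRf hR hgz hz
  have hgf := he2 _ z hRf hz
  have hgg := he2 _ z hR hgz
  have hfg : Tendsto (fun n => f (g (x n))) atTop (nhds (g z)) :=
    (tendsto_iff_of_dist hcomp).1 hgf
  obtain ⟨φ, hφ, hφR⟩ := he3 _ z hR hgz
  refine ⟨z, tendsto_nhds_unique (hfg.comp hφ.tendsto_atTop) ?_⟩
  rw [tendsto_iff_dist_tendsto_zero]
  have hb0 : Tendsto (fun k => α * dist (g (g (x (φ k)))) (g z)) atTop (nhds 0) := by
    have h := (tendsto_iff_dist_tendsto_zero.1 (hgg.comp hφ.tendsto_atTop)).const_mul α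
    simpa using h
  refine squeeze_zero (fun _ => dist_nonneg) (fun k => ?_) hb0
  rcases hφR k with h | h
  · exact hd _ _ h
  · have h' := hd _ _ h
    rw [dist_comm (f z), dist_comm (g z)] at h'
    exact h'
end

section
/- Let (X,d) be a metric space, R a binary relation on X, Y an R-complete subspace of X, and f, g two self-mappings on X. Suppose: (a) f(X) ⊆ g(X) ∩ Y; (b) R is (f,g)-closed; (c) there exists x₀ ∈ X with (g x₀, f x₀) ∈ R; (d) there exists α ∈ [0,1) such that d(f x, f y) ≤ α·d(g x, g y) for all x,y ∈ X with (g x, g y) ∈ R; (e′1) Y ⊆ g(X); (e′2) f is (g,R)-continuous. Then f and g have a coincidence point, i.e. there exists u ∈ X with g u = f u. -/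
open Filter

/-- Theorem 2, case (e′) with `f` `(g,R)`-continuous: existence of a
coincidence point of `f` and `g`. -/
theorem coincidence_e'_gRcontinuous {X : Type*} [MetricSpace X]
    (R : X → X → Prop) (Y : Set X) (f g : X → X)
    (hY : ∀ s : ℕ → X, (∀ n, s n ∈ Y) → (∀ n, R (s n) (s (n + 1))) → CauchySeq s →
      ∃ y ∈ Y, Tendsto s atTop (nhds y))
    (ha : ∀ x : X, f x ∈ Set.range g ∩ Y)
    (hb : ∀ x y : X, R (g x) (g y) → R (f x) (f y))
    (hc : ∃ x₀ : X, R (g x₀) (f x₀))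
    (hd : ∃ α : ℝ, 0 ≤ α ∧ α < 1 ∧
      ∀ x y : X, R (g x) (g y) → dist (f x) (f y) ≤ α * dist (g x) (g y))
    (he'1 : Y ⊆ Set.range g)
    (he'2 : ∀ (s : ℕ → X) (x : X), (∀ n, R (g (s n)) (g (s (n + 1)))) →
      Tendsto (fun n => g (s n)) atTop (nhds (g x)) →
      Tendsto (fun n => f (s n)) atTop (nhds (f x))) :
    ∃ u : X, g u = f u := by
  obtain ⟨x₀, h0⟩ := hc
  obtain ⟨α, hα0, hα1, hα⟩ := hd
  choose h hh using fun x => (ha x).1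
  let x : ℕ → X := fun n => h^[n] x₀
  have hx : ∀ n, g (x (n + 1)) = f (x n) := by
    intro n
    change g (h^[n + 1] x₀) = f (h^[n] x₀)
    rw [Function.iterate_succ_apply', hh]
  have hR : ∀ n, R (g (x n)) (g (x (n + 1))) := by
    intro n
    induction n with
    | zero => rw [hx]; exact h0
    | succ k ih =>
      rw [hx (k + 1), hx k]
      exact hb _ _ ih
  have hdist : ∀ n, dist (f (x n)) (f (x (n + 1))) ≤ dist (f (x 0)) (f (x 1)) * α ^ n := by
    intro n
    induction n with
    | zero => simp
    | succ k ih =>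
      have h1 := hα _ _ (hR (k + 1))
      rw [hx (k + 1), hx k] at h1
      calc _ ≤ _ := h1
        _ ≤ α * (dist (f (x 0)) (f (x 1)) * α ^ k) := mul_le_mul_of_nonneg_left ih hα0
        _ = _ := by ring
  have hC : CauchySeq (fun n => f (x n)) := cauchySeq_of_le_geometric α _ hα1 hdist
  obtain ⟨y, hyY, hy⟩ := hY (fun n => f (x n)) (fun n => (ha _).2)
    (fun n => hb _ _ (hR n)) hC
  obtain ⟨u, rfl⟩ := he'1 hyY
  have hg : Tendsto (fun n => g (x n)) atTop (nhds (g u)) := by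
    rw [← tendsto_add_atTop_iff_nat 1]
    simpa only [hx] using hy
  exact ⟨u, tendsto_nhds_unique hy (he'2 x u hR hg)⟩
end

section
/- Let (X,d) be a metric space, R a binary relation on X, Y an R-complete subspace of X, and f, g two self-mappings on X. Suppose: (a) f(X) ⊆ g(X) ∩ Y; (b) R is (f,g)-closed; (c) there exists x₀ ∈ X with (g x₀, f x₀) ∈ R; (d) there exists α ∈ [0,1) such that d(f x, f y) ≤ α·d(g x, g y) for all x,y ∈ X with (g x, g y) ∈ R; (e′1) Y ⊆ g(X); (e′2) the restriction R|_Y is d-self-closed. Then f and g have a coincidence point, i.e. there exists u ∈ X with g u = f u. -/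
open Filter

/-- Theorem 2, case (e′) with `R|_Y` `d`-self-closed: existence of a
coincidence point of `f` and `g`. Here `R|_Y x y` means `R x y ∧ x ∈ Y ∧ y ∈ Y`. -/
theorem coincidence_e'_restrictionSelfClosed {X : Type*} [MetricSpace X]
    (R : X → X → Prop) (Y : Set X) (f g : X → X)
    (hY : ∀ s : ℕ → X, (∀ n, s n ∈ Y) → (∀ n, R (s n) (s (n + 1))) → CauchySeq s →
      ∃ y ∈ Y, Tendsto s atTop (nhds y))
    (ha : ∀ x : X, f x ∈ Set.range g ∩ Y)
    (hb : ∀ x y : X, R (g x) (g y) → R (f x) (f y))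
    (hc : ∃ x₀ : X, R (g x₀) (f x₀))
    (hd : ∃ α : ℝ, 0 ≤ α ∧ α < 1 ∧
      ∀ x y : X, R (g x) (g y) → dist (f x) (f y) ≤ α * dist (g x) (g y))
    (he'1 : Y ⊆ Set.range g)
    (he'2 : ∀ (s : ℕ → X) (x : X),
      (∀ n, R (s n) (s (n + 1)) ∧ s n ∈ Y ∧ s (n + 1) ∈ Y) →
      Tendsto s atTop (nhds x) →
      ∃ φ : ℕ → ℕ, StrictMono φ ∧
        ∀ k, (R (s (φ k)) x ∧ s (φ k) ∈ Y ∧ x ∈ Y) ∨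
             (R x (s (φ k)) ∧ x ∈ Y ∧ s (φ k) ∈ Y)) :
    ∃ u : X, g u = f u := by
  obtain ⟨x₀, hx₀⟩ := hc
  obtain ⟨α, hα0, hα1, hd⟩ := hd
  choose h hh using fun x => (ha x).1
  let x : ℕ → X := fun n => h^[n] x₀
  have hx : ∀ n, g (x (n + 1)) = f (x n) := by
    intro n
    simp only [x, Function.iterate_succ_apply', hh]
  have hR : ∀ n, R (g (x n)) (g (x (n + 1))) := by
    intro n
    induction n with
    | zero => rw [hx]; exact hx₀
    | succ n ih => rw [hx, hx (n + 1)]; exact hb _ _ ih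
  have hRs : ∀ n, R (f (x n)) (f (x (n + 1))) := fun n => hb _ _ (hR n)
  have hdist : ∀ n, dist (f (x n)) (f (x (n + 1))) ≤ dist (f (x 0)) (f (x 1)) * α ^ n := by
    intro n
    induction n with
    | zero => simp
    | succ n ih =>
      have h1 := hd _ _ (hR (n + 1))
      rw [hx n, hx (n + 1)] at h1
      have h2 := mul_le_mul_of_nonneg_left ih hα0
      calc _ ≤ _ := h1
        _ ≤ _ := h2
        _ = _ := by ring
  have hC : CauchySeq (fun n => f (x n)) := cauchySeq_of_le_geometric α _ hα1 hdist
  obtain ⟨y, hyY, hy⟩ := hY (fun n => f (x n)) (fun n => (ha _).2) hRs hC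
  obtain ⟨u, rfl⟩ := he'1 hyY
  obtain ⟨φ, hφ, hφR⟩ := he'2 (fun n => f (x n)) (g u)
    (fun n => ⟨hRs n, (ha _).2, (ha _).2⟩) hy
  have hlim : Tendsto (fun k => f (x (φ k))) atTop (nhds (g u)) := hy.comp hφ.tendsto_atTop
  have hlim1 : Tendsto (fun k => f (x (φ k + 1))) atTop (nhds (g u)) :=
    hy.comp ((tendsto_add_atTop_nat 1).comp hφ.tendsto_atTop)
  have hbd : ∀ k, dist (f (x (φ k + 1))) (f u) ≤ α * dist (f (x (φ k))) (g u) := by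
    intro k
    rcases hφR k with h1 | h1
    · have h2 := h1.1
      simp only [← hx (φ k)] at h2
      have h3 := hd _ _ h2
      rwa [hx (φ k)] at h3
    · have h2 := h1.1
      simp only [← hx (φ k)] at h2
      have h3 := hd _ _ h2
      rw [hx (φ k)] at h3
      rwa [dist_comm, dist_comm _ (g u)]
  have hlim2 : Tendsto (fun k => f (x (φ k + 1))) atTop (nhds (f u)) := by
    rw [tendsto_iff_dist_tendsto_zero]
    refine squeeze_zero (fun _ => dist_nonneg) hbd ?_
    simpa using (tendsto_iff_dist_tendsto_zero.1 hlim).const_mul α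
  exact ⟨u, tendsto_nhds_unique hlim1 hlim2⟩
end

section
/- Let (X,d) be a metric space, R a binary relation on X, and f, g two self-mappings on X. Suppose: (a) f(X) ⊆ g(X); (b) R is (f,g)-closed; (d) there exists α ∈ [0,1) such that d(f x, f y) ≤ α·d(g x, g y) for all x,y ∈ X with (g x, g y) ∈ R; and (u₁) f(X) is (R|_{g(X)})^s-connected, i.e. for every pair of points u, v ∈ f(X) there is a path in (R|_{g(X)})^s from u to v. Then any two points of coincidence of f and g are equal: if x̄ = g x = f x and ȳ = g y = f y for some x, y ∈ X, then x̄ = ȳ. In particular, if in addition f and g have a coincidence point (as guaranteed under the hypotheses of the main coincidence theorem), then f and g have a unique point of coincidence. -/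
/-- Theorem 3: under (a), (b), (d) and the
`(R|_{g(X)})^s`-connectedness of `f(X)`, any two points of coincidence of `f` and
`g` are equal; in particular, if `f` and `g` have a coincidence point then they
have a unique point of coincidence. -/
theorem unique_point_of_coincidence {X : Type*} [MetricSpace X]
    (R : X → X → Prop) (f g : X → X)
    (ha : ∀ x : X, f x ∈ Set.range g)
    (hb : ∀ x y : X, R (g x) (g y) → R (f x) (f y))
    (hd : ∃ α : ℝ, 0 ≤ α ∧ α < 1 ∧
      ∀ x y : X, R (g x) (g y) → dist (f x) (f y) ≤ α * dist (g x) (g y))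
    (hu1 : ∀ u ∈ Set.range f, ∀ v ∈ Set.range f,
      ∃ (k : ℕ) (z : ℕ → X), z 0 = u ∧ z k = v ∧
        ∀ i < k, (R (z i) (z (i + 1)) ∨ R (z (i + 1)) (z i)) ∧
          z i ∈ Set.range g ∧ z (i + 1) ∈ Set.range g) :
    (∀ x y xb yb : X, xb = g x → xb = f x → yb = g y → yb = f y → xb = yb) ∧
    ((∃ z : X, g z = f z) → ∃! w : X, ∃ x : X, w = g x ∧ w = f x) := by
  classical
  have key : ∀ x y : X, g x = f x → g y = f y → g x = g y := by
    intro x y hx hy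
    by_contra hne
    obtain ⟨α, h0, h1, hα⟩ := hd
    -- a section of `g` sending `g x` to `x` and `g y` to `y`
    obtain ⟨p, hp, hpx, hpy⟩ : ∃ p : X → X, (∀ u ∈ Set.range g, g (p u) = u) ∧
        p (g x) = x ∧ p (g y) = y := by
      have hc : ∀ u : X, ∃ a : X, (u ∈ Set.range g → g a = u) ∧
          (u = g x → a = x) ∧ (u = g y → a = y) := by
        intro u
        by_cases hux : u = g x
        · exact ⟨x, fun _ => hux.symm, fun _ => rfl, fun h => absurd (hux.symm.trans h) hne⟩
        · by_cases huy : u = g y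
          · exact ⟨y, fun _ => huy.symm, fun h => absurd h hux, fun _ => rfl⟩
          · by_cases hu : u ∈ Set.range g
            · obtain ⟨a, ha'⟩ := hu
              exact ⟨a, fun _ => ha', fun h => absurd h hux, fun h => absurd h huy⟩
            · exact ⟨x, fun h => absurd h hu, fun h => absurd h hux, fun h => absurd h huy⟩
      choose p hp using hc
      exact ⟨p, fun u => (hp u).1, (hp _).2.1 rfl, (hp _).2.2 rfl⟩
    let h : X → X := fun a => p (f a)
    have hg : ∀ a, g (h a) = f a := fun a => hp _ (ha a)
    have hhx : ∀ n, h^[n] x = x := fun n =>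
      Function.iterate_fixed (show p (f x) = x by rw [← hx, hpx]) n
    have hhy : ∀ n, h^[n] y = y := fun n =>
      Function.iterate_fixed (show p (f y) = y by rw [← hy, hpy]) n
    have hit : ∀ a b, R (g a) (g b) → ∀ n, R (g (h^[n] a)) (g (h^[n] b)) ∧
        dist (g (h^[n] a)) (g (h^[n] b)) ≤ α ^ n * dist (g a) (g b) := by
      intro a b hab n
      induction n with
      | zero => simpa using hab
      | succ n ih =>
        rw [Function.iterate_succ_apply', Function.iterate_succ_apply', hg, hg]
        refine ⟨hb _ _ ih.1, (hα _ _ ih.1).trans ?_⟩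
        rw [pow_succ', mul_assoc]
        exact mul_le_mul_of_nonneg_left ih.2 h0
    have hlim : ∀ a b, R (g a) (g b) → Filter.Tendsto
        (fun n => dist (g (h^[n] a)) (g (h^[n] b))) Filter.atTop (nhds 0) := by
      intro a b hab
      refine squeeze_zero (fun _ => dist_nonneg) (fun n => (hit a b hab n).2) ?_
      simpa using (tendsto_pow_atTop_nhds_zero_of_lt_one h0 h1).mul_const (dist (g a) (g b))
    obtain ⟨k, z, hz0, hzk, hz⟩ := hu1 (g x) ⟨x, hx.symm⟩ (g y) ⟨y, hy.symm⟩
    have hpath : ∀ i ≤ k, Filter.Tendsto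
        (fun n => dist (g (h^[n] (p (z 0)))) (g (h^[n] (p (z i))))) Filter.atTop (nhds 0) := by
      intro i
      induction i with
      | zero => intro _; simp
      | succ i ih =>
        intro hi
        obtain ⟨hr, hi1, hi2⟩ := hz i hi
        have hstep : Filter.Tendsto (fun n => dist (g (h^[n] (p (z i))))
            (g (h^[n] (p (z (i + 1)))))) Filter.atTop (nhds 0) := by
          rcases hr with hr | hr
          · exact hlim _ _ (by rwa [hp _ hi1, hp _ hi2])
          · simpa only [dist_comm] using
              hlim (p (z (i + 1))) (p (z i)) (by rwa [hp _ hi1, hp _ hi2])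
        refine squeeze_zero (fun _ => dist_nonneg) (fun n => dist_triangle _ (g (h^[n] (p (z i)))) _) ?_
        · simpa using (ih (by omega)).add hstep
    have hfin := hpath k le_rfl
    rw [hz0, hzk, hpx, hpy] at hfin
    simp only [hhx, hhy] at hfin
    exact hne (dist_eq_zero.mp (tendsto_nhds_unique tendsto_const_nhds hfin))
  refine ⟨?_, ?_⟩
  · intro x y xb yb h1 h2 h3 h4
    rw [h1, h3]
    exact key x y (h1.symm.trans h2) (h3.symm.trans h4)
  · rintro ⟨c, hc⟩
    refine ⟨g c, ⟨c, rfl, hc⟩, ?_⟩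
    rintro w ⟨x, h1, h2⟩
    rw [h1]
    exact key x c (h1.symm.trans h2) hc
end

section
/- Let (X,d) be a metric space, R a binary relation on X, and f, g two self-mappings on X. Suppose: (a) f(X) ⊆ g(X); (b) R is (f,g)-closed; (d) there exists α ∈ [0,1) such that d(f x, f y) ≤ α·d(g x, g y) for all x,y ∈ X with (g x, g y) ∈ R; and (u₁′) R|_{f(X)} is complete, i.e. [u,v] ∈ R for all u, v ∈ f(X). Then any two points of coincidence of f and g are equal: if x̄ = g x = f x and ȳ = g y = f y for some x, y ∈ X, then x̄ = ȳ. -/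
/-- Corollary 3, condition (u₁′): under (a), (b), (d) and
completeness of `R|_{f(X)}`, any two points of coincidence of `f` and `g` are
equal. -/
theorem unique_point_of_coincidence_complete_restriction {X : Type*} [MetricSpace X]
    (R : X → X → Prop) (f g : X → X)
    (ha : ∀ x : X, f x ∈ Set.range g)
    (hb : ∀ x y : X, R (g x) (g y) → R (f x) (f y))
    (hd : ∃ α : ℝ, 0 ≤ α ∧ α < 1 ∧
      ∀ x y : X, R (g x) (g y) → dist (f x) (f y) ≤ α * dist (g x) (g y))
    (hu1' : ∀ u ∈ Set.range f, ∀ v ∈ Set.range f, R u v ∨ R v u) :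
    ∀ x y xb yb : X, xb = g x → xb = f x → yb = g y → yb = f y → xb = yb := by
  intro x y xb yb hgx hfx hgy hfy
  obtain ⟨α, _, h1, hc⟩ := hd
  have key : dist xb yb ≤ α * dist xb yb := by
    rcases hu1' xb ⟨x, hfx.symm⟩ yb ⟨y, hfy.symm⟩ with h | h
    · have h2 := hc x y (by rw [← hgx, ← hgy]; exact h)
      rwa [← hfx, ← hfy, ← hgx, ← hgy] at h2
    · have h2 := hc y x (by rw [← hgx, ← hgy]; exact h)
      rwa [← hfx, ← hfy, ← hgx, ← hgy, dist_comm yb xb] at h2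
  have h0 : 0 ≤ dist xb yb := dist_nonneg
  exact dist_le_zero.mp (by nlinarith)
end

section
/- Let (X,d) be a metric space, R a binary relation on X, and f, g two self-mappings on X. Suppose: (a) f(X) ⊆ g(X); (b) R is (f,g)-closed; (d) there exists α ∈ [0,1) such that d(f x, f y) ≤ α·d(g x, g y) for all x,y ∈ X with (g x, g y) ∈ R; and (u₁″) f(X) is (R|_{g(X)})^s-directed, i.e. for every pair u, v ∈ f(X) there exists w ∈ g(X) such that [u,w] ∈ R|_{g(X)} and [v,w] ∈ R|_{g(X)}. Then any two points of coincidence of f and g are equal: if x̄ = g x = f x and ȳ = g y = f y for some x, y ∈ X, then x̄ = ȳ. -/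
/-- Corollary 3, condition (u₁″): under (a), (b), (d) and
`(R|_{g(X)})^s`-directedness of `f(X)`, any two points of coincidence of `f` and
`g` are equal. -/
theorem unique_point_of_coincidence_directed {X : Type*} [MetricSpace X]
    (R : X → X → Prop) (f g : X → X)
    (ha : ∀ x : X, f x ∈ Set.range g)
    (hb : ∀ x y : X, R (g x) (g y) → R (f x) (f y))
    (hd : ∃ α : ℝ, 0 ≤ α ∧ α < 1 ∧
      ∀ x y : X, R (g x) (g y) → dist (f x) (f y) ≤ α * dist (g x) (g y))
    (hu1'' : ∀ u ∈ Set.range f, ∀ v ∈ Set.range f,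
      ∃ w ∈ Set.range g,
        ((R u w ∨ R w u) ∧ u ∈ Set.range g ∧ w ∈ Set.range g) ∧
        ((R v w ∨ R w v) ∧ v ∈ Set.range g ∧ w ∈ Set.range g)) :
    ∀ x y xb yb : X, xb = g x → xb = f x → yb = g y → yb = f y → xb = yb := by
  obtain ⟨α, h0, h1, hd⟩ := hd
  choose h hh using ha
  intro x y xb yb hx1 hx2 hy1 hy2
  obtain ⟨w, ⟨z, hz⟩, ⟨hxw, -⟩, ⟨hyw, -⟩⟩ := hu1'' xb ⟨x, hx2.symm⟩ yb ⟨y, hy2.symm⟩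
  have key : ∀ a p : X, p = g a → p = f a → (R p w ∨ R w p) → ∀ n : ℕ,
      (R p (g (h^[n] z)) ∨ R (g (h^[n] z)) p) ∧
        dist p (g (h^[n] z)) ≤ α ^ n * dist p w := by
    intro a p hp1 hp2 hw n
    induction n with
    | zero => simpa [hz] using hw
    | succ n ih =>
      obtain ⟨ihR, ihd⟩ := ih
      rw [Function.iterate_succ_apply', hh]
      generalize h^[n] z = t at ihR ihd ⊢
      have hstep : (R p (f t) ∨ R (f t) p) ∧ dist p (f t) ≤ α * dist p (g t) := by
        rcases ihR with hR | hR
        · rw [hp1] at hR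
          have e1 := hb _ _ hR
          have e2 := hd _ _ hR
          rw [← hp1, ← hp2] at e2
          rw [← hp2] at e1
          exact ⟨Or.inl e1, e2⟩
        · rw [hp1] at hR
          have e1 := hb _ _ hR
          have e2 := hd _ _ hR
          rw [← hp1, ← hp2, dist_comm, dist_comm (g t)] at e2
          rw [← hp2] at e1
          exact ⟨Or.inr e1, e2⟩
      refine ⟨hstep.1, hstep.2.trans ?_⟩
      calc α * dist p (g t) ≤ α * (α ^ n * dist p w) := mul_le_mul_of_nonneg_left ihd h0
        _ = α ^ (n + 1) * dist p w := by ring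
  have hlim : Filter.Tendsto (fun n : ℕ => α ^ n * (dist xb w + dist yb w)) Filter.atTop
      (nhds 0) := by
    simpa using (tendsto_pow_atTop_nhds_zero_of_lt_one h0 h1).mul_const (dist xb w + dist yb w)
  apply dist_le_zero.mp
  refine ge_of_tendsto' hlim fun n => ?_
  have e1 := (key x xb hx1 hx2 hxw n).2
  have e2 := (key y yb hy1 hy2 hyw n).2
  have e3 := dist_triangle_right xb yb (g (h^[n] z))
  rw [mul_add]
  linarith
end

section
/- Let (X,d) be a metric space, R a binary relation on X, and f, g two self-mappings on X. Suppose: (a) f(X) ⊆ g(X); (b) R is (f,g)-closed; (d) there exists α ∈ [0,1) such that d(f x, f y) ≤ α·d(g x, g y) for all x,y ∈ X with (g x, g y) ∈ R; (u₁) f(X) is (R|_{g(X)})^s-connected, i.e. for every pair of points u, v ∈ f(X) there is a path in (R|_{g(X)})^s from u to v; and (u₂) at least one of f and g is injective. Then any two coincidence points of f and g are equal: if g x = f x and g y = f y, then x = y. -/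
/-- Theorem 4: under (a), (b), (d), (u₁) and injectivity of `f` or
`g`, any two coincidence points of `f` and `g` are equal. -/
theorem unique_coincidence_point {X : Type*} [MetricSpace X]
    (R : X → X → Prop) (f g : X → X)
    (ha : ∀ x : X, f x ∈ Set.range g)
    (hb : ∀ x y : X, R (g x) (g y) → R (f x) (f y))
    (hd : ∃ α : ℝ, 0 ≤ α ∧ α < 1 ∧
      ∀ x y : X, R (g x) (g y) → dist (f x) (f y) ≤ α * dist (g x) (g y))
    (hu1 : ∀ u ∈ Set.range f, ∀ v ∈ Set.range f,
      ∃ (k : ℕ) (z : ℕ → X), z 0 = u ∧ z k = v ∧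
        ∀ i < k, (R (z i) (z (i + 1)) ∨ R (z (i + 1)) (z i)) ∧
          z i ∈ Set.range g ∧ z (i + 1) ∈ Set.range g)
    (hu2 : Function.Injective f ∨ Function.Injective g) :
    ∀ x y : X, g x = f x → g y = f y → x = y := by
  intro x y hx hy
  obtain ⟨α, h0, h1, hd⟩ := hd
  suffices hg : g x = g y by
    rcases hu2 with h | h
    · exact h (by rw [← hx, ← hy, hg])
    · exact h hg
  obtain ⟨k, z, hz0, hzk, hz⟩ := hu1 (f x) ⟨x, rfl⟩ (f y) ⟨y, rfl⟩
  rcases Nat.eq_zero_or_pos k with rfl | hk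
  · rw [hx, hy, ← hz0, ← hzk]
  have hd' : ∀ a b : X, (R (g a) (g b) ∨ R (g b) (g a)) →
      dist (f a) (f b) ≤ α * dist (g a) (g b) := by
    rintro a b (h | h)
    · exact hd a b h
    · rw [dist_comm (f a), dist_comm (g a)]
      exact hd b a h
  have lift : ∀ u : ℕ → X, u 0 = g x → u k = g y → (∀ i ≤ k, u i ∈ Set.range g) →
      ∃ w : ℕ → X, w 0 = x ∧ w k = y ∧ ∀ i ≤ k, g (w i) = u i := by
    intro u hu0 huk hu
    haveI : Nonempty X := ⟨x⟩
    choose! s hs using hu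
    refine ⟨fun i => if i = 0 then x else if i = k then y else s i, by simp, by simp [hk.ne'], ?_⟩
    intro i hi
    by_cases hi0 : i = 0
    · subst hi0; simp [hu0]
    · by_cases hik : i = k
      · subst hik; simp [hi0, huk]
      · simp [hi0, hik, hs i hi]
  have main : ∃ C : ℝ, ∀ n : ℕ, ∃ w : ℕ → X, w 0 = x ∧ w k = y ∧
      (∀ i < k, R (g (w i)) (g (w (i + 1))) ∨ R (g (w (i + 1))) (g (w i))) ∧
      ∑ i ∈ Finset.range k, dist (g (w i)) (g (w (i + 1))) ≤ α ^ n * C := by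
    refine ⟨∑ i ∈ Finset.range k, dist (z i) (z (i + 1)), fun n => ?_⟩
    induction n with
    | zero =>
      obtain ⟨w, hw0, hwk, hw⟩ := lift z (by rw [hz0, hx]) (by rw [hzk, hy]) (by
        intro i hi
        rcases hi.lt_or_eq with h | h
        · exact (hz i h).2.1
        · rw [h, hzk]; exact ha y)
      refine ⟨w, hw0, hwk, ?_, ?_⟩
      · intro i hi
        rw [hw i hi.le, hw (i + 1) hi]
        exact (hz i hi).1
      · rw [pow_zero, one_mul]
        apply Finset.sum_le_sum
        intro i hi
        have hi := Finset.mem_range.1 hi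
        rw [hw i hi.le, hw (i + 1) hi]
    | succ n ih =>
      obtain ⟨v, hv0, hvk, hvR, hvs⟩ := ih
      obtain ⟨w, hw0, hwk, hw⟩ := lift (fun i => f (v i)) (by simp [hv0, hx])
        (by simp [hvk, hy]) (fun i _ => ha (v i))
      refine ⟨w, hw0, hwk, ?_, ?_⟩
      · intro i hi
        rw [hw i hi.le, hw (i + 1) hi]
        exact (hvR i hi).imp (hb _ _) (hb _ _)
      · calc ∑ i ∈ Finset.range k, dist (g (w i)) (g (w (i + 1)))
            ≤ ∑ i ∈ Finset.range k, α * dist (g (v i)) (g (v (i + 1))) := by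
              apply Finset.sum_le_sum
              intro i hi
              have hi := Finset.mem_range.1 hi
              rw [hw i hi.le, hw (i + 1) hi]
              exact hd' _ _ (hvR i hi)
          _ = α * ∑ i ∈ Finset.range k, dist (g (v i)) (g (v (i + 1))) := by
              rw [Finset.mul_sum]
          _ ≤ α * (α ^ n * _) := mul_le_mul_of_nonneg_left hvs h0
          _ = _ := by ring
  obtain ⟨C, hC⟩ := main
  have hle : ∀ n : ℕ, dist (g x) (g y) ≤ α ^ n * C := by
    intro n
    obtain ⟨w, hw0, hwk, _, hs⟩ := hC n
    have := dist_le_range_sum_dist (fun i => g (w i)) k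
    simp only [hw0, hwk] at this
    exact this.trans hs
  have ht : Filter.Tendsto (fun n : ℕ => α ^ n * C) Filter.atTop (nhds 0) := by
    simpa using (tendsto_pow_atTop_nhds_zero_of_lt_one h0 h1).mul_const C
  exact dist_le_zero.1 (ge_of_tendsto' ht hle)
end

section
/- Let (X,d) be a metric space, R a binary relation on X, and f, g two self-mappings on X. Suppose: (a) f(X) ⊆ g(X); (b) R is (f,g)-closed; (d) there exists α ∈ [0,1) such that d(f x, f y) ≤ α·d(g x, g y) for all x,y ∈ X with (g x, g y) ∈ R; (u₁) f(X) is (R|_{g(X)})^s-connected, i.e. for every pair of points u, v ∈ f(X) there is a path in (R|_{g(X)})^s from u to v; (e′3) f and g are weakly compatible; and f and g have at least one coincidence point. Then f and g have a unique common fixed point: there exists a unique x̄ ∈ X with x̄ = g x̄ = f x̄. -/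
/-- Theorem 5: under (a), (b), (d), (u₁), weak compatibility of
`f` and `g`, and existence of a coincidence point, `f` and `g` have a unique
common fixed point. -/
theorem unique_common_fixed_point {X : Type*} [MetricSpace X]
    (R : X → X → Prop) (f g : X → X)
    (ha : ∀ x : X, f x ∈ Set.range g)
    (hb : ∀ x y : X, R (g x) (g y) → R (f x) (f y))
    (hd : ∃ α : ℝ, 0 ≤ α ∧ α < 1 ∧
      ∀ x y : X, R (g x) (g y) → dist (f x) (f y) ≤ α * dist (g x) (g y))
    (hu1 : ∀ u ∈ Set.range f, ∀ v ∈ Set.range f,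
      ∃ (k : ℕ) (z : ℕ → X), z 0 = u ∧ z k = v ∧
        ∀ i < k, (R (z i) (z (i + 1)) ∨ R (z (i + 1)) (z i)) ∧
          z i ∈ Set.range g ∧ z (i + 1) ∈ Set.range g)
    (he'3 : ∀ x : X, g x = f x → g (f x) = f (g x))
    (hcoin : ∃ x : X, g x = f x) :
    ∃! xb : X, xb = g xb ∧ xb = f xb := by
  obtain ⟨α, h0, h1, hd⟩ := hd
  have key : ∀ x y : X, g x = f x → g y = f y → g x = g y := by
    intro x y hx hy
    obtain ⟨k, z, hz0, hzk, hz⟩ := hu1 (f x) ⟨x, rfl⟩ (f y) ⟨y, rfl⟩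
    rcases Nat.eq_zero_or_pos k with hk | hk
    · subst hk
      rw [hx, hy, ← hz0, hzk]
    have hw : ∀ i, ∃ u, i ≤ k → g u = z i ∧ (i = 0 → u = x) ∧ (i = k → u = y) := by
      intro i
      by_cases hi0 : i = 0
      · subst hi0
        exact ⟨x, fun _ => ⟨by rw [hz0, hx], fun _ => rfl, fun h => by omega⟩⟩
      by_cases hik : i = k
      · subst hik
        exact ⟨y, fun _ => ⟨by rw [hzk, hy], fun h => by omega, fun _ => rfl⟩⟩
      by_cases hlt : i < k
      · obtain ⟨u, hu⟩ := (hz i hlt).2.1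
        exact ⟨u, fun _ => ⟨hu, fun h => absurd h hi0, fun h => absurd h hik⟩⟩
      · exact ⟨x, fun h => by omega⟩
    choose w hw using hw
    have step : ∀ n : ℕ, ∃ v : ℕ → X, v 0 = x ∧ v k = y ∧ ∀ i < k,
        (R (g (v i)) (g (v (i+1))) ∨ R (g (v (i+1))) (g (v i))) ∧
        dist (g (v i)) (g (v (i+1))) ≤ α ^ n * dist (z i) (z (i+1)) := by
      intro n
      induction n with
      | zero =>
        refine ⟨w, (hw 0 hk.le).2.1 rfl, (hw k le_rfl).2.2 rfl, fun i hi => ?_⟩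
        rw [(hw i hi.le).1, (hw (i+1) hi).1]
        exact ⟨(hz i hi).1, by simp⟩
      | succ n ih =>
        obtain ⟨v, hv0, hvk, hv⟩ := ih
        have hs : ∀ i, ∃ u, g u = f (v i) ∧ (i = 0 → u = x) ∧ (i = k → u = y) := by
          intro i
          by_cases hi0 : i = 0
          · subst hi0
            exact ⟨x, by rw [hv0, hx], fun _ => rfl, fun h => by omega⟩
          by_cases hik : i = k
          · subst hik
            exact ⟨y, by rw [hvk, hy], fun h => by omega, fun _ => rfl⟩
          obtain ⟨u, hu⟩ := ha (v i)
          exact ⟨u, hu, fun h => absurd h hi0, fun h => absurd h hik⟩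
        choose v' hv' using hs
        refine ⟨v', (hv' 0).2.1 rfl, (hv' k).2.2 rfl, fun i hi => ?_⟩
        rw [(hv' i).1, (hv' (i+1)).1]
        obtain ⟨hR, hD⟩ := hv i hi
        refine ⟨hR.imp (hb _ _) (hb _ _), ?_⟩
        have hc : dist (f (v i)) (f (v (i+1))) ≤ α * dist (g (v i)) (g (v (i+1))) := by
          rcases hR with h | h
          · exact hd _ _ h
          · rw [dist_comm, dist_comm (g (v i))]
            exact hd _ _ h
        calc _ ≤ _ := hc
          _ ≤ α * (α ^ n * dist (z i) (z (i+1))) := mul_le_mul_of_nonneg_left hD h0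
          _ = _ := by ring
    have hle : ∀ n : ℕ, dist (g x) (g y) ≤
        α ^ n * ∑ i ∈ Finset.range k, dist (z i) (z (i+1)) := by
      intro n
      obtain ⟨v, hv0, hvk, hv⟩ := step n
      have h := dist_le_range_sum_dist (fun i => g (v i)) k
      simp only [hv0, hvk] at h
      rw [Finset.mul_sum]
      exact h.trans (Finset.sum_le_sum fun i hi => (hv i (Finset.mem_range.1 hi)).2)
    have hlim := (tendsto_pow_atTop_nhds_zero_of_lt_one h0 h1).mul_const
      (∑ i ∈ Finset.range k, dist (z i) (z (i+1)))
    rw [zero_mul] at hlim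
    exact dist_le_zero.1 (ge_of_tendsto' hlim hle)
  obtain ⟨x, hx⟩ := hcoin
  have hb1 : g (g x) = f (g x) := by
    have h := he'3 x hx
    rwa [← hx] at h
  have hg : g (g x) = g x := key _ _ hb1 hx
  refine ⟨g x, ⟨hg.symm, hg.symm.trans hb1⟩, ?_⟩
  rintro y ⟨h2, h3⟩
  exact h2.trans (key y x (h2.symm.trans h3) hx)
end

section
/- Let (X,d) be a metric space, R a binary relation on X, f a self-mapping on X, and Y an R-complete subspace of X with f(X) ⊆ Y. Suppose: (i) R is f-closed; (ii) either f is R-continuous or R|_Y is d-self-closed; (iii) there exists x ∈ X with (x, f x) ∈ R; (iv) there exists α ∈ [0,1) such that d(f x, f y) ≤ α·d(x,y) for all x,y ∈ X with (x,y) ∈ R. Then f has a fixed point. Moreover, if additionally (v) f(X) is R^s-connected, i.e. for every pair of points u, v ∈ f(X) there is a path in R^s from u to v, then f has a unique fixed point. -/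
open Filter

/-- Corollary 4: fixed point theorem for a self-mapping `f` on a
metric space with an `R`-complete subspace `Y ⊇ f(X)`; uniqueness under
`R^s`-connectedness of `f(X)`. -/
theorem fixed_point_via_rComplete_subspace {X : Type*} [MetricSpace X]
    (R : X → X → Prop) (f : X → X) (Y : Set X)
    (hY : ∀ s : ℕ → X, (∀ n, s n ∈ Y) → (∀ n, R (s n) (s (n + 1))) → CauchySeq s →
      ∃ y ∈ Y, Tendsto s atTop (nhds y))
    (hfY : ∀ x : X, f x ∈ Y)
    (h1 : ∀ x y : X, R x y → R (f x) (f y))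
    (h2 : (∀ (s : ℕ → X) (x : X), (∀ n, R (s n) (s (n + 1))) →
        Tendsto s atTop (nhds x) →
        Tendsto (fun n => f (s n)) atTop (nhds (f x))) ∨
      (∀ (s : ℕ → X) (x : X),
        (∀ n, R (s n) (s (n + 1)) ∧ s n ∈ Y ∧ s (n + 1) ∈ Y) →
        Tendsto s atTop (nhds x) →
        ∃ φ : ℕ → ℕ, StrictMono φ ∧
          ∀ k, (R (s (φ k)) x ∧ s (φ k) ∈ Y ∧ x ∈ Y) ∨
               (R x (s (φ k)) ∧ x ∈ Y ∧ s (φ k) ∈ Y)))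
    (h3 : ∃ x : X, R x (f x))
    (h4 : ∃ α : ℝ, 0 ≤ α ∧ α < 1 ∧
      ∀ x y : X, R x y → dist (f x) (f y) ≤ α * dist x y) :
    (∃ x : X, f x = x) ∧
    ((∀ u ∈ Set.range f, ∀ v ∈ Set.range f,
        ∃ (k : ℕ) (z : ℕ → X), z 0 = u ∧ z k = v ∧
          ∀ i < k, (R (z i) (z (i + 1)) ∨ R (z (i + 1)) (z i))) →
      ∃! x : X, f x = x) := by
  obtain ⟨α, ha0, ha1, hc⟩ := h4
  have key : ∀ u v, R u v → ∀ n : ℕ, R (f^[n] u) (f^[n] v) ∧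
      dist (f^[n] u) (f^[n] v) ≤ α ^ n * dist u v := by
    intro u v huv n
    induction n with
    | zero => simpa using huv
    | succ n ih =>
      simp only [Function.iterate_succ_apply']
      refine ⟨h1 _ _ ih.1, (hc _ _ ih.1).trans ?_⟩
      calc α * dist (f^[n] u) (f^[n] v) ≤ α * (α ^ n * dist u v) :=
            mul_le_mul_of_nonneg_left ih.2 ha0
        _ = α ^ (n + 1) * dist u v := by ring
  have hpow : ∀ c : ℝ, Tendsto (fun n : ℕ => α ^ n * c) atTop (nhds 0) := by
    intro c
    simpa using (tendsto_pow_atTop_nhds_zero_of_lt_one ha0 ha1).mul_const c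
  have hex : ∃ x : X, f x = x := by
    obtain ⟨x, hx⟩ := h3
    have hR : ∀ n, R (f^[n] (f x)) (f^[n + 1] (f x)) := fun n => by
      rw [Function.iterate_succ_apply]
      exact (key _ _ (h1 _ _ hx) n).1
    have hmem : ∀ n, f^[n] (f x) ∈ Y := fun n => by
      rw [← Function.iterate_succ_apply, Function.iterate_succ_apply']
      exact hfY _
    have hC : CauchySeq (fun n => f^[n] (f x)) := by
      refine cauchySeq_of_le_geometric α (dist (f x) (f (f x))) ha1 fun n => ?_
      rw [Function.iterate_succ_apply, mul_comm]
      exact (key _ _ (h1 _ _ hx) n).2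
    obtain ⟨y, -, hy⟩ := hY (fun n => f^[n] (f x)) hmem hR hC
    have hs : Tendsto (fun n => f (f^[n] (f x))) atTop (nhds y) := by
      have := (tendsto_add_atTop_iff_nat 1).2 hy
      simpa only [Function.iterate_succ_apply'] using this
    refine ⟨y, ?_⟩
    rcases h2 with h2 | h2
    · exact tendsto_nhds_unique (h2 _ y hR hy) hs
    · obtain ⟨φ, hφ, hk⟩ := h2 _ y (fun n => ⟨hR n, hmem n, hmem (n + 1)⟩) hy
      refine tendsto_nhds_unique ?_ (hs.comp hφ.tendsto_atTop)
      have h0 : Tendsto (fun k => α * dist (f^[φ k] (f x)) y) atTop (nhds 0) := by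
        simpa using (tendsto_iff_dist_tendsto_zero.1 (hy.comp hφ.tendsto_atTop)).const_mul α
      refine tendsto_iff_dist_tendsto_zero.2 (squeeze_zero (fun _ => dist_nonneg) (fun k => ?_) h0)
      rcases hk k with h | h
      · exact hc _ _ h.1
      · have := hc _ _ h.1
        rw [dist_comm, dist_comm y] at this
        exact this
  refine ⟨hex, fun hconn => ?_⟩
  obtain ⟨x, hx⟩ := hex
  refine ⟨x, hx, fun y hy => ?_⟩
  simp only at hy
  obtain ⟨k, z, hz0, hzk, hz⟩ := hconn y ⟨y, hy⟩ x ⟨x, hx⟩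
  have hind : ∀ i ≤ k, Tendsto (fun n => dist (f^[n] (z 0)) (f^[n] (z i))) atTop (nhds 0) := by
    intro i
    induction i with
    | zero => intro _; simp
    | succ i ih =>
      intro hi
      have hsum := (ih (by omega)).add (hpow (dist (z i) (z (i + 1))))
      rw [add_zero] at hsum
      refine squeeze_zero (fun _ => dist_nonneg) (fun n => ?_) hsum
      refine (dist_triangle _ (f^[n] (z i)) _).trans (add_le_add le_rfl ?_)
      rcases hz i (by omega) with h | h
      · exact (key _ _ h n).2
      · have := (key _ _ h n).2
        rw [dist_comm, dist_comm (z (i + 1))] at this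
        exact this
  have hfin := hind k le_rfl
  simp only [hz0, hzk, Function.iterate_fixed hx, Function.iterate_fixed hy] at hfin
  exact dist_eq_zero.1 (tendsto_nhds_unique tendsto_const_nhds hfin)
end
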